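/- Dual representation: for every X ∈ L^ψ, the φ-divergence risk measure satisfies ρ_{φ,β}(X) = sup{E[X·Z] : Z ∈ L¹, Z ≥ 0 a.s., E[Z] = 1, E[φ(Z)] ≤ β}, and this value is finite. -/

import Mathlib

open MeasureTheory
open scoped ENNReal

noncomputable section

/-- A divergence function: convex, lower semicontinuous `φ : ℝ → ℝ ∪ {∞}` with `φ 1 = 0`,
effective domain `[0, ∞)` and superlinear growth `φ x / x → ∞` as `x → ∞`. -/
structure IsDivergenceFunction (φ : ℝ → EReal) : Prop where
  convex : ∀ x y a b : ℝ, 0 < a → 0 < b → a + b = 1 →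
    φ (a * x + b * y) ≤ (a : EReal) * φ x + (b : EReal) * φ y
  lsc : LowerSemicontinuous φ
  ne_bot : ∀ x : ℝ, φ x ≠ ⊥
  one : φ 1 = 0
  domain : ∀ x : ℝ, φ x ≠ ⊤ ↔ 0 ≤ x
  superlinear : ∀ M : ℝ, ∃ N : ℝ, ∀ x : ℝ, N ≤ x → ((M * x : ℝ) : EReal) ≤ φ x

/-- The convex conjugate `ψ(y) = sup_z (y·z − φ(z))`, as an extended real number. -/
def psiE (φ : ℝ → EReal) (y : ℝ) : EReal := ⨆ z : ℝ, (((y * z : ℝ) : EReal) - φ z)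

/-- The convex conjugate, as a real number (it is finite for divergence functions). -/
def psiR (φ : ℝ → EReal) (y : ℝ) : ℝ := (psiE φ y).toReal

open Classical in
/-- The objective `t (β + μ + E ψ(X/t − μ))` of the φ-divergence risk measure;
the value is `⊤` when `ψ(X/t − μ)` fails to be integrable. -/
def rhoObj {Ω : Type*} [MeasurableSpace Ω] (φ : ℝ → EReal) (β : ℝ) (P : Measure Ω)
    (X : Ω → ℝ) (μ t : ℝ) : EReal :=
  if Integrable (fun ω => psiR φ (X ω / t - μ)) P then
    (((t * (β + μ + ∫ ω, psiR φ (X ω / t - μ) ∂P)) : ℝ) : EReal)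
  else ⊤

/-- The φ-divergence risk measure `ρ_{φ,β}(X) = inf_{μ ∈ ℝ, t > 0} t (β + μ + E ψ(X/t − μ))`. -/
def rhoDiv {Ω : Type*} [MeasurableSpace Ω] (φ : ℝ → EReal) (β : ℝ) (P : Measure Ω)
    (X : Ω → ℝ) : EReal :=
  ⨅ (μ : ℝ) (t : ℝ) (_ : 0 < t), rhoObj φ β P X μ t

/-- The dual set of the φ-divergence risk measure: values `E[X·Z]` for densities
`Z ≥ 0` with `E Z = 1` and `E φ(Z) ≤ β`. -/
def dualSet {Ω : Type*} [MeasurableSpace Ω] (φ : ℝ → EReal) (β : ℝ) (P : Measure Ω)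
    (X : Ω → ℝ) : Set EReal :=
  {v | ∃ Z : Ω → ℝ, Integrable Z P ∧ (∀ᵐ ω ∂P, 0 ≤ Z ω) ∧ (∫ ω, Z ω ∂P) = 1 ∧
    Integrable (fun ω => (φ (Z ω)).toReal) P ∧ (∫ ω, (φ (Z ω)).toReal ∂P) ≤ β ∧
    Integrable (fun ω => X ω * Z ω) P ∧ v = ((∫ ω, X ω * Z ω ∂P : ℝ) : EReal)}
variable {Ω : Type*} [MeasurableSpace Ω]

/-!
Weak duality is the Fenchel–Young inequality `y z ≤ ψ(y) + φ(z)`, integrated.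

For the converse, let `w` bound `E[X·Z]` over the feasible simple densities `Z`. Since `Z = 1`
satisfies `E[φ(Z)] = 0 < β`, separating `(1, β, w)` from the attainable values of
`(E[Z], E[φ(Z)], E[X·Z])` yields Lagrange multipliers `a` and `t ≥ 0` for the two constraints, valid
over all simple `Z ≥ 0`. Simple functions suffice to interchange supremum and expectation, because
`ψ` is already a supremum over rational `z`; hence for `t > 0` the supremum of the Lagrangian is the
objective of `ρ` at `t` and `μ = -a / t`, which is therefore at most `w`.
-/

open Filter Topology

theorem nonneg_of_forall_le_mul {A γ : ℝ} (h : ∀ v, 0 ≤ v → A ≤ γ * v) : 0 ≤ γ := by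
  by_contra! hγ
  have hA := h ((|A| + 1) / -γ) (by have := neg_pos.2 hγ; positivity)
  rw [div_neg, mul_neg, mul_div_cancel₀ _ hγ.ne] at hA
  linarith [neg_abs_le A]

section Lagrange

variable {E : Type*} [AddCommGroup E] [Module ℝ E] {s : Set E} {f g : E → ℝ} {ℓ : E →ₗ[ℝ] ℝ}

/-- The values attainable in the problem "maximise `f x` over `x ∈ s` under constraints on `ℓ x`
and `g x`", relaxed monotonically in the inequality constraint and in the objective. -/
def attainableValues (s : Set E) (ℓ : E →ₗ[ℝ] ℝ) (g f : E → ℝ) : Set (ℝ × ℝ × ℝ) :=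
  {p | ∃ x ∈ s, ℓ x = p.1 ∧ g x ≤ p.2.1 ∧ p.2.2 ≤ f x}

theorem convex_attainableValues (hg : ConvexOn ℝ s g) (hf : ConcaveOn ℝ s f) :
    Convex ℝ (attainableValues s ℓ g f) := by
  rintro p ⟨x, hx, hpx, hgx, hfx⟩ q ⟨y, hy, hqy, hgy, hfy⟩ a b ha hb hab
  refine ⟨a • x + b • y, hg.1 hx hy ha hb hab, ?_, ?_, ?_⟩
  · simp [hpx, hqy]
  · exact (hg.2 hx hy ha hb hab).trans
      (add_le_add (smul_le_smul_of_nonneg_left hgx ha) (smul_le_smul_of_nonneg_left hgy hb))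
  · exact (add_le_add (smul_le_smul_of_nonneg_left hfx ha)
      (smul_le_smul_of_nonneg_left hfy hb)).trans (hf.2 hx hy ha hb hab)

theorem nonempty_interior_attainableValues (hg : ConvexOn ℝ s g) (hf : ConcaveOn ℝ s f)
    {x y : E} (hx : x ∈ s) (hy : y ∈ s) (hxy : ℓ x < ℓ y) :
    (interior (attainableValues s ℓ g f)).Nonempty := by
  set U := Set.Ioo (ℓ x) (ℓ y) ×ˢ Set.Ioi (max (g x) (g y)) ×ˢ Set.Iio (min (f x) (f y))
  have hU : U ⊆ attainableValues s ℓ g f := by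
    rintro ⟨u, r, v⟩ ⟨hu, hr, hv⟩
    have hmem : u ∈ ℓ.toAffineMap '' segment ℝ x y := by
      rw [image_segment]
      exact segment_eq_Icc hxy.le ▸ Set.Ioo_subset_Icc_self hu
    obtain ⟨z, hz, rfl⟩ := hmem
    exact ⟨z, hg.1.segment_subset hx hy hz, rfl, (hg.le_on_segment hx hy hz).trans (le_of_lt hr),
      (le_of_lt hv).trans (hf.ge_on_segment hx hy hz)⟩
  have hUo : IsOpen U := isOpen_Ioo.prod (isOpen_Ioi.prod isOpen_Iio)
  refine Set.Nonempty.mono (interior_maximal hU hUo) ?_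
  exact (Set.nonempty_Ioo.2 hxy).prod (Set.nonempty_Ioi.prod Set.nonempty_Iio)

theorem notMem_interior_attainableValues {c b w : ℝ}
    (hw : ∀ x ∈ s, ℓ x = c → g x ≤ b → f x ≤ w) :
    (c, b, w) ∉ interior (attainableValues s ℓ g f) := by
  intro hmem
  have hcont : Tendsto (fun v : ℝ => (c, b, v)) (𝓝 w) (𝓝 (c, b, w)) :=
    Continuous.tendsto (by fun_prop) w
  have hnear : ∀ᶠ v in 𝓝[>] w, (c, b, v) ∈ attainableValues s ℓ g f :=
    (hcont.mono_left nhdsWithin_le_nhds).eventually (mem_interior_iff_mem_nhds.1 hmem)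
  obtain ⟨v, ⟨x, hx, hℓ, hg, hv⟩, hwv⟩ := (hnear.and self_mem_nhdsWithin).exists
  exact absurd (hw x hx hℓ hg) (not_le.2 (lt_of_lt_of_le hwv hv))

theorem strongDual_prod_prod_apply (F : StrongDual ℝ (ℝ × ℝ × ℝ)) (p : ℝ × ℝ × ℝ) :
    F p = F (1, 0, 0) * p.1 + F (0, 1, 0) * p.2.1 + F (0, 0, 1) * p.2.2 := by
  have hp : p = p.1 • (1, 0, 0) + p.2.1 • (0, 1, 0) + p.2.2 • (0, 0, 1) := by simp
  conv_lhs => rw [hp]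
  simp only [map_add, map_smul, smul_eq_mul, mul_comm]

theorem exists_separating_multipliers (hg : ConvexOn ℝ s g) (hf : ConcaveOn ℝ s f) {c b w : ℝ}
    (hw : ∀ x ∈ s, ℓ x = c → g x ≤ b → f x ≤ w)
    {x y : E} (hx : x ∈ s) (hy : y ∈ s) (hxy : ℓ x < ℓ y) :
    ∃ A B C : ℝ, (A, B, C) ≠ 0 ∧ ∀ z ∈ s, ∀ r ≥ 0, ∀ v ≥ 0,
      A * (ℓ z - c) + B * (g z + r - b) + C * (f z - v - w) ≤ 0 := by
  obtain ⟨F, hF, hle⟩ := geometric_hahn_banach_of_nonempty_interior_point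
    (convex_attainableValues hg hf) (notMem_interior_attainableValues hw)
    (nonempty_interior_attainableValues hg hf hx hy hxy)
  refine ⟨F (1, 0, 0), F (0, 1, 0), F (0, 0, 1), fun h => hF ?_, fun z hz r hr v hv => ?_⟩
  · simp only [Prod.mk_eq_zero] at h
    exact ContinuousLinearMap.ext fun p => by rw [strongDual_prod_prod_apply]; simp [h]
  · have := hle (ℓ z, g z + r, f z - v) ⟨z, hz, rfl, by simpa using hr, by simpa using hv⟩
    rw [strongDual_prod_prod_apply F, strongDual_prod_prod_apply F (c, b, w)] at this
    linarith

theorem exists_lagrange_multipliers (hg : ConvexOn ℝ s g) (hf : ConcaveOn ℝ s f) {c b w : ℝ}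
    (hw : ∀ x ∈ s, ℓ x = c → g x ≤ b → f x ≤ w)
    {x₀ x₁ x₂ : E} (hx₀ : x₀ ∈ s) (hℓ₀ : ℓ x₀ = c) (hg₀ : g x₀ < b)
    (hx₁ : x₁ ∈ s) (hℓ₁ : ℓ x₁ < c) (hx₂ : x₂ ∈ s) (hℓ₂ : c < ℓ x₂) :
    ∃ a t : ℝ, 0 ≤ t ∧ ∀ x ∈ s, f x + a * (ℓ x - c) - t * (g x - b) ≤ w := by
  obtain ⟨A, B, C, hne, hsep⟩ :=
    exists_separating_multipliers hg hf hw hx₁ hx₂ (hℓ₁.trans hℓ₂)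
  have hB : B ≤ 0 := by
    refine neg_nonneg.1 (nonneg_of_forall_le_mul (A := B * (g x₀ - b) + C * (f x₀ - w)) ?_)
    intro r hr
    have := hsep x₀ hx₀ r hr 0 le_rfl
    rw [hℓ₀] at this
    linarith
  have hC : 0 ≤ C := by
    refine nonneg_of_forall_le_mul (A := B * (g x₀ - b) + C * (f x₀ - w)) fun v hv => ?_
    have := hsep x₀ hx₀ 0 le_rfl v hv
    rw [hℓ₀] at this
    linarith
  have hsep₀ : ∀ x ∈ s, A * (ℓ x - c) + B * (g x - b) + C * (f x - w) ≤ 0 := fun x hx => by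
    simpa using hsep x hx 0 le_rfl 0 le_rfl
  -- The Slater point `x₀` and the two-sided slack in `ℓ` rule out a vertical hyperplane.
  have hCpos : 0 < C := by
    refine hC.lt_of_ne' fun hC0 => hne ?_
    have hB0 : B = 0 := by
      have := hsep₀ x₀ hx₀
      rw [hℓ₀, hC0] at this
      nlinarith
    have h₁ := hsep₀ x₁ hx₁
    have h₂ := hsep₀ x₂ hx₂
    rw [hB0, hC0] at h₁ h₂
    have hA0 : A = 0 := by nlinarith
    simp [hA0, hB0, hC0]
  refine ⟨A / C, -B / C, div_nonneg (neg_nonneg.2 hB) hC, fun x hx => ?_⟩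
  have hscale : C * (f x + A / C * (ℓ x - c) - -B / C * (g x - b) - w)
      = A * (ℓ x - c) + B * (g x - b) + C * (f x - w) := by
    field_simp
    ring
  exact sub_nonpos.1 (nonpos_of_mul_nonpos_right (hscale.trans_le (hsep₀ x hx)) hCpos)

end Lagrange

section MonotoneConvergence

variable {μ : Measure Ω}

theorem integrable_of_monotone_of_integral_le {F : ℕ → Ω → ℝ} {f : Ω → ℝ} {C : ℝ}
    (hF : ∀ n, Integrable (F n) μ) (hmono : ∀ᵐ ω ∂μ, Monotone fun n => F n ω)
    (hlim : ∀ᵐ ω ∂μ, Tendsto (fun n => F n ω) atTop (𝓝 (f ω)))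
    (hC : ∀ n, ∫ ω, F n ω ∂μ ≤ C) : Integrable f μ := by
  have hint : ∀ n, Integrable (F n - F 0) μ := fun n => (hF n).sub (hF 0)
  have hnonneg : ∀ n, 0 ≤ᵐ[μ] F n - F 0 := fun n => by
    filter_upwards [hmono] with ω hω using sub_nonneg.2 (hω n.zero_le)
  have hle : ∫⁻ ω, ENNReal.ofReal (f ω - F 0 ω) ∂μ ≤ ENNReal.ofReal (C - ∫ ω, F 0 ω ∂μ) := by
    refine le_of_tendsto' (lintegral_tendsto_of_tendsto_of_monotone
      (f := fun n ω => ENNReal.ofReal ((F n - F 0) ω))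
      (fun n => (hint n).aemeasurable.ennreal_ofReal) ?_ ?_) fun n => ?_
    · filter_upwards [hmono] with ω hω m n hmn
      exact ENNReal.ofReal_le_ofReal (sub_le_sub_right (hω hmn) _)
    · filter_upwards [hlim] with ω hω using ENNReal.tendsto_ofReal (hω.sub_const _)
    · rw [← ofReal_integral_eq_lintegral_ofReal (hint n) (hnonneg n), integral_sub' (hF n) (hF 0)]
      exact ENNReal.ofReal_le_ofReal (sub_le_sub_right (hC n) _)
  have hfm : AEStronglyMeasurable f μ :=
    aestronglyMeasurable_of_tendsto_ae _ (fun n => (hF n).1) hlim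
  have hf0 : 0 ≤ᵐ[μ] f - F 0 := by
    filter_upwards [hmono, hlim] with ω hm hl using sub_nonneg.2 (hm.ge_of_tendsto hl 0)
  have hsub : Integrable (f - F 0) μ :=
    (lintegral_ofReal_ne_top_iff_integrable (hfm.sub (hF 0).1) hf0).1
      (hle.trans_lt ENNReal.ofReal_lt_top).ne
  simpa using hsub.add (hF 0)

theorem integrable_partialSups {u : ℕ → Ω → ℝ} (hu : ∀ n, Integrable (u n) μ) (n : ℕ) :
    Integrable (partialSups u n) μ := by
  induction n with
  | zero => simpa using hu 0
  | succ n ih => simpa using ih.sup (hu (n + 1))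

theorem exists_simpleFunc_eq_partialSups {α : Type*} [LinearOrder α] [TopologicalSpace α]
    [OrderClosedTopology α] [SecondCountableTopology α] [MeasurableSpace α]
    [OpensMeasurableSpace α] {u : ℕ → Ω → α} (hu : ∀ n, Measurable (u n)) (n : ℕ) :
    ∃ τ : SimpleFunc Ω ℕ, ∀ ω, u (τ ω) ω = partialSups u n ω := by
  induction n with
  | zero => exact ⟨SimpleFunc.const Ω 0, fun ω => by simp⟩
  | succ n ih =>
    obtain ⟨τ, hτ⟩ := ih
    have hs : MeasurableSet {ω | u (τ ω) ω ≤ u (n + 1) ω} :=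
      measurableSet_le (τ.measurable_bind u hu) (hu (n + 1))
    refine ⟨SimpleFunc.piecewise _ hs (SimpleFunc.const Ω (n + 1)) τ, fun ω => ?_⟩
    rw [SimpleFunc.piecewise_apply, partialSups_add_one, Pi.sup_apply, ← hτ]
    split_ifs with hω
    · exact (sup_of_le_right hω).symm
    · exact (sup_of_le_left (le_of_not_ge hω)).symm

theorem isLUB_range_partialSups_apply {T α : Type*} [SemilatticeSup α] {u : ℕ → T → α}
    {x : T} {y : α} (h : IsLUB (Set.range fun n => u n x) y) :
    IsLUB (Set.range fun n => partialSups u n x) y := by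
  simpa only [IsLUB, Pi.partialSups_apply, upperBounds_range_partialSups] using h

theorem integrable_and_integral_le_of_isLUB {ι : Type*} [Countable ι] [Nonempty ι]
    {u : ι → Ω → ℝ} (hu : ∀ i, Integrable (u i) μ) {U : Ω → ℝ}
    (hU : ∀ᵐ ω ∂μ, IsLUB (Set.range fun i => u i ω) (U ω)) {C : ℝ}
    (hC : ∀ τ : SimpleFunc Ω ι, ∫ ω, u (τ ω) ω ∂μ ≤ C) :
    Integrable U μ ∧ ∫ ω, U ω ∂μ ≤ C := by
  obtain ⟨e, he⟩ := exists_surjective_nat ι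
  let v : ℕ → Ω → ℝ := fun n => (hu (e n)).1.mk
  have hv : ∀ n, Measurable (v n) := fun n => (hu (e n)).1.measurable_mk
  have huv : ∀ᵐ ω ∂μ, ∀ n, u (e n) ω = v n ω := ae_all_iff.2 fun n => (hu (e n)).1.ae_eq_mk
  have hF : ∀ n, Integrable (partialSups v n) μ :=
    integrable_partialSups fun n => (hu (e n)).congr (hu (e n)).1.ae_eq_mk
  have hmono : ∀ᵐ ω ∂μ, Monotone fun n => partialSups v n ω :=
    .of_forall fun ω m n hmn => partialSups_monotone v hmn ω
  have hlim : ∀ᵐ ω ∂μ, Tendsto (fun n => partialSups v n ω) atTop (𝓝 (U ω)) := by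
    filter_upwards [huv, hU, hmono] with ω hω hLUB hm
    refine tendsto_atTop_isLUB hm (isLUB_range_partialSups_apply ?_)
    simpa only [← hω] using he.range_comp (fun i => u i ω) ▸ hLUB
  have hle : ∀ n, ∫ ω, partialSups v n ω ∂μ ≤ C := fun n => by
    obtain ⟨τ, hτ⟩ := exists_simpleFunc_eq_partialSups hv n
    refine (integral_congr_ae ?_).trans_le (hC (τ.map e))
    filter_upwards [huv] with ω hω
    rw [← hτ, SimpleFunc.map_apply, hω]
  have hUint : Integrable U μ := integrable_of_monotone_of_integral_le hF hmono hlim hle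
  exact ⟨hUint, le_of_tendsto' (integral_tendsto_of_tendsto_of_monotone hF hUint hmono hlim) hle⟩

end MonotoneConvergence

section SimpleFunctions

variable {P : Measure Ω}

theorem integrable_comp_simpleFunc [IsFiniteMeasure P] {α : Type*} (f : α → ℝ)
    (Z : SimpleFunc Ω α) : Integrable (fun ω => f (Z ω)) P :=
  (Z.map f).integrable_of_isFiniteMeasure

theorem integrable_mul_simpleFunc {X : Ω → ℝ} (hX : Integrable X P) (Z : SimpleFunc Ω ℝ) :
    Integrable (fun ω => X ω * Z ω) P :=
  have ⟨_, hc⟩ := Z.exists_forall_norm_le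
  hX.mul_bdd Z.aestronglyMeasurable (.of_forall hc)

theorem integral_div_sub_mul_sub_simpleFunc [IsFiniteMeasure P] {X : Ω → ℝ} (hX : Integrable X P)
    (f : ℝ → ℝ) (s μ : ℝ) (Z : SimpleFunc Ω ℝ) :
    ∫ ω, (X ω / s - μ) * Z ω - f (Z ω) ∂P
      = (∫ ω, X ω * Z ω ∂P) / s - μ * ∫ ω, Z ω ∂P - ∫ ω, f (Z ω) ∂P := by
  have hXZ := (integrable_mul_simpleFunc hX Z).div_const s
  have hZ : Integrable (fun ω => μ * Z ω) P := Z.integrable_of_isFiniteMeasure.const_mul μ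
  have hsub : Integrable (fun ω => X ω * Z ω / s - μ * Z ω) P := hXZ.sub hZ
  rw [← integral_div, ← integral_const_mul, ← integral_sub hXZ hZ,
    ← integral_sub hsub (integrable_comp_simpleFunc f Z)]
  congr with ω
  ring

/-- The pairing `Z ↦ E[X·Z]` of an integrable random variable with simple functions. -/
def simpleFuncPairing {X : Ω → ℝ} (hX : Integrable X P) : SimpleFunc Ω ℝ →ₗ[ℝ] ℝ where
  toFun Z := ∫ ω, X ω * Z ω ∂P
  map_add' Z W := by
    simp only [SimpleFunc.coe_add, Pi.add_apply, mul_add]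
    exact integral_add (integrable_mul_simpleFunc hX Z) (integrable_mul_simpleFunc hX W)
  map_smul' c Z := by
    simp only [SimpleFunc.coe_smul, Pi.smul_apply, smul_eq_mul, mul_left_comm _ c,
      integral_const_mul, RingHom.id_apply]

theorem convexOn_integral_comp_simpleFunc [IsFiniteMeasure P] {E : Type*} [AddCommGroup E]
    [Module ℝ E] {s : Set E} {f : E → ℝ} (hf : ConvexOn ℝ s f) :
    ConvexOn ℝ {Z : SimpleFunc Ω E | ∀ ω, Z ω ∈ s} fun Z => ∫ ω, f (Z ω) ∂P := by
  refine ⟨fun Z hZ W hW a b ha hb hab ω => hf.1 (hZ ω) (hW ω) ha hb hab,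
    fun Z hZ W hW a b ha hb hab => ?_⟩
  have hZi := (integrable_comp_simpleFunc (P := P) f Z).const_mul a
  have hWi := (integrable_comp_simpleFunc (P := P) f W).const_mul b
  calc ∫ ω, f ((a • Z + b • W) ω) ∂P
      ≤ ∫ ω, a * f (Z ω) + b * f (W ω) ∂P :=
        integral_mono (integrable_comp_simpleFunc f _) (hZi.add hWi)
          fun ω => hf.2 (hZ ω) (hW ω) ha hb hab
    _ = a • ∫ ω, f (Z ω) ∂P + b • ∫ ω, f (W ω) ∂P := by
        rw [integral_add hZi hWi, integral_const_mul, integral_const_mul, smul_eq_mul, smul_eq_mul]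

end SimpleFunctions

namespace IsDivergenceFunction

variable {φ : ℝ → EReal}

theorem coe_toReal (hφ : IsDivergenceFunction φ) {z : ℝ} (hz : 0 ≤ z) :
    ((φ z).toReal : EReal) = φ z :=
  EReal.coe_toReal ((hφ.domain z).2 hz) (hφ.ne_bot z)

theorem eq_top_of_neg (hφ : IsDivergenceFunction φ) {z : ℝ} (hz : z < 0) : φ z = ⊤ :=
  not_not.1 fun h => hz.not_ge ((hφ.domain z).1 h)

theorem convexOn_toReal (hφ : IsDivergenceFunction φ) :
    ConvexOn ℝ (Set.Ici 0) fun z => (φ z).toReal := by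
  refine convexOn_iff_forall_pos.2 ⟨convex_Ici 0, fun x hx y hy a b ha hb hab => ?_⟩
  have hxy : 0 ≤ a * x + b * y := add_nonneg (mul_nonneg ha.le hx) (mul_nonneg hb.le hy)
  have h := hφ.convex x y a b ha hb hab
  rw [← hφ.coe_toReal hx, ← hφ.coe_toReal hy, ← hφ.coe_toReal hxy] at h
  exact_mod_cast h

theorem exists_forall_le_toReal_of_le (hφ : IsDivergenceFunction φ) (N : ℝ) :
    ∃ m : ℝ, ∀ z, 0 ≤ z → z ≤ N → m ≤ (φ z).toReal := by
  rcases lt_or_ge N 0 with hN | hN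
  · exact ⟨0, fun z hz hzN => absurd (hz.trans hzN) (not_le.2 hN)⟩
  obtain ⟨z₀, _, hmin⟩ := LowerSemicontinuousOn.exists_isMinOn (Set.nonempty_Icc.2 hN)
    isCompact_Icc (hφ.lsc.lowerSemicontinuousOn (Set.Icc 0 N))
  refine ⟨(φ z₀).toReal, fun z hz hzN => ?_⟩
  exact EReal.toReal_le_toReal (hmin ⟨hz, hzN⟩) (hφ.ne_bot z₀) ((hφ.domain z).2 hz)

theorem exists_forall_mul_sub_toReal_le (hφ : IsDivergenceFunction φ) (y : ℝ) :
    ∃ B : ℝ, ∀ z, 0 ≤ z → y * z - (φ z).toReal ≤ B := by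
  obtain ⟨N, hN⟩ := hφ.superlinear y
  obtain ⟨m, hm⟩ := hφ.exists_forall_le_toReal_of_le N
  refine ⟨max 0 (|y| * N - m), fun z hz => ?_⟩
  rcases le_total N z with hNz | hzN
  · have h := hN z hNz
    rw [← hφ.coe_toReal hz, EReal.coe_le_coe_iff] at h
    exact le_max_of_le_left (sub_nonpos.2 h)
  · exact le_max_of_le_right (sub_le_sub
      (mul_le_mul (le_abs_self y) hzN hz (abs_nonneg y)) (hm z hz hzN))

theorem psiE_le_coe_iff (hφ : IsDivergenceFunction φ) {y B : ℝ} :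
    psiE φ y ≤ B ↔ ∀ z, 0 ≤ z → y * z - (φ z).toReal ≤ B := by
  refine iSup_le_iff.trans (forall_congr' fun z => ?_)
  rcases lt_or_ge z 0 with hz | hz
  · simp [hφ.eq_top_of_neg hz, hz.not_ge]
  · rw [← hφ.coe_toReal hz, ← EReal.coe_sub, EReal.coe_le_coe_iff, EReal.toReal_coe]
    exact ⟨fun h _ => h, fun h => h hz⟩

theorem coe_psiR (hφ : IsDivergenceFunction φ) (y : ℝ) : (psiR φ y : EReal) = psiE φ y := by
  obtain ⟨B, hB⟩ := hφ.exists_forall_mul_sub_toReal_le y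
  refine EReal.coe_toReal (ne_top_of_le_ne_top (EReal.coe_ne_top B) (hφ.psiE_le_coe_iff.2 hB)) ?_
  refine ne_bot_of_le_ne_bot ?_ (le_iSup (fun z : ℝ => ((y * z : ℝ) : EReal) - φ z) 1)
  rw [hφ.one, sub_zero]
  exact EReal.coe_ne_bot _

theorem psiR_le_iff (hφ : IsDivergenceFunction φ) {y B : ℝ} :
    psiR φ y ≤ B ↔ ∀ z, 0 ≤ z → y * z - (φ z).toReal ≤ B := by
  rw [← hφ.psiE_le_coe_iff, ← hφ.coe_psiR, EReal.coe_le_coe_iff]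

theorem mul_sub_le_psiR (hφ : IsDivergenceFunction φ) (y : ℝ) {z : ℝ} (hz : 0 ≤ z) :
    y * z - (φ z).toReal ≤ psiR φ y :=
  hφ.psiR_le_iff.1 le_rfl z hz

theorem monotone_psiR (hφ : IsDivergenceFunction φ) : Monotone (psiR φ) := fun _ y hxy =>
  hφ.psiR_le_iff.2 fun _ hz =>
    (sub_le_sub_right (mul_le_mul_of_nonneg_right hxy hz) _).trans (hφ.mul_sub_le_psiR y hz)

theorem psiR_zero_nonneg (hφ : IsDivergenceFunction φ) : 0 ≤ psiR φ 0 := by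
  simpa [hφ.one] using hφ.mul_sub_le_psiR 0 zero_le_one

theorem isLUB_range_nnrat_psiR (hφ : IsDivergenceFunction φ) (y : ℝ) :
    IsLUB (Set.range fun q : ℚ≥0 => y * q - (φ q).toReal) (psiR φ y) := by
  refine ⟨Set.forall_mem_range.2 fun q => hφ.mul_sub_le_psiR y q.cast_nonneg, fun B hB => ?_⟩
  replace hB : ∀ q : ℚ≥0, y * q - (φ q).toReal ≤ B := Set.forall_mem_range.1 hB
  refine hφ.psiR_le_iff.2 fun z hz => ?_
  rcases hz.eq_or_lt with rfl | hz
  · simpa using hB 0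
  have hcont : ContinuousOn (fun z => (φ z).toReal) (Set.Ioi 0) := by
    simpa using hφ.convexOn_toReal.continuousOn_interior
  have hcl : z ∈ closure (Set.Ioi 0 ∩ Set.range ((↑) : ℚ → ℝ)) :=
    Rat.denseRange_cast.open_subset_closure_inter isOpen_Ioi hz
  have hcont_at : ContinuousAt (fun z => y * z - (φ z).toReal) z :=
    (continuousAt_const.mul continuousAt_id).sub (hcont.continuousAt (Ioi_mem_nhds hz))
  refine ContinuousWithinAt.closure_le hcl hcont_at.continuousWithinAt
    continuousWithinAt_const ?_
  rintro _ ⟨hr, r, rfl⟩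
  lift r to ℚ≥0 using Rat.cast_nonneg.1 (le_of_lt (Set.mem_Ioi.1 hr))
  simpa using hB r

end IsDivergenceFunction

section RiskMeasure

variable {P : Measure Ω} {φ : ℝ → EReal} {β : ℝ} {X : Ω → ℝ}

namespace IsDivergenceFunction

theorem integrable_psiR_and_integral_le [IsFiniteMeasure P] (hφ : IsDivergenceFunction φ)
    {Y : Ω → ℝ} (hY : Integrable Y P) {C : ℝ}
    (hC : ∀ Z : SimpleFunc Ω ℝ, (∀ ω, 0 ≤ Z ω) → ∫ ω, Y ω * Z ω - (φ (Z ω)).toReal ∂P ≤ C) :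
    Integrable (fun ω => psiR φ (Y ω)) P ∧ ∫ ω, psiR φ (Y ω) ∂P ≤ C :=
  integrable_and_integral_le_of_isLUB (u := fun (q : ℚ≥0) ω => Y ω * q - (φ q).toReal)
    (fun q => (hY.mul_const (q : ℝ)).sub (integrable_const _))
    (.of_forall fun ω => hφ.isLUB_range_nnrat_psiR (Y ω))
    fun τ => hC (τ.map (↑)) fun ω => (τ ω).cast_nonneg

theorem integrable_psiR_of_le [IsFiniteMeasure P] (hφ : IsDivergenceFunction φ) {Y W : Ω → ℝ}
    (hY : AEMeasurable Y P) (hYW : Y ≤ W) (hW : Integrable (fun ω => psiR φ (W ω)) P) :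
    Integrable (fun ω => psiR φ (Y ω)) P :=
  integrable_of_le_of_le (hφ.monotone_psiR.measurable.comp_aemeasurable hY).aestronglyMeasurable
    (.of_forall fun ω => by simpa using hφ.mul_sub_le_psiR (Y ω) le_rfl)
    (.of_forall fun ω => hφ.monotone_psiR (hYW ω)) (integrable_const (-(φ 0).toReal)) hW

theorem neg_psiR_zero_le_integral [IsProbabilityMeasure P] (hφ : IsDivergenceFunction φ)
    {Z : Ω → ℝ} (hZ : ∀ ω, 0 ≤ Z ω) (hφZ : Integrable (fun ω => (φ (Z ω)).toReal) P) :
    -psiR φ 0 ≤ ∫ ω, (φ (Z ω)).toReal ∂P := by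
  have hle : ∀ ω, -psiR φ 0 ≤ (φ (Z ω)).toReal := fun ω => by
    simpa [neg_le] using hφ.mul_sub_le_psiR 0 (hZ ω)
  simpa using integral_mono (integrable_const (-psiR φ 0)) hφZ hle

end IsDivergenceFunction

theorem rhoDiv_le_rhoObj (φ : ℝ → EReal) (β : ℝ) (P : Measure Ω) (X : Ω → ℝ) (μ : ℝ) {t : ℝ}
    (ht : 0 < t) : rhoDiv φ β P X ≤ rhoObj φ β P X μ t :=
  iInf_le_of_le μ (iInf₂_le t ht)

theorem sSup_dualSet_le_rhoDiv (hφ : IsDivergenceFunction φ) :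
    sSup (dualSet φ β P X) ≤ rhoDiv φ β P X := by
  refine sSup_le ?_
  rintro _ ⟨Z, hZ, hZ0, hZ1, hφZ, hφβ, hXZ, rfl⟩
  refine le_iInf fun μ => le_iInf₂ fun t ht => ?_
  rw [rhoObj]
  split_ifs with hψ
  swap
  · exact le_top
  have hyoung : ∫ ω, X ω * Z ω / t - μ * Z ω ∂P ≤
      ∫ ω, psiR φ (X ω / t - μ) + (φ (Z ω)).toReal ∂P := by
    refine integral_mono_ae ((hXZ.div_const t).sub (hZ.const_mul μ)) (hψ.add hφZ) ?_
    filter_upwards [hZ0] with ω hω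
    refine le_trans (le_of_eq ?_) (sub_le_iff_le_add.1 (hφ.mul_sub_le_psiR (X ω / t - μ) hω))
    ring
  rw [integral_sub (hXZ.div_const t) (hZ.const_mul μ), integral_add hψ hφZ, integral_div,
    integral_const_mul, hZ1] at hyoung
  refine EReal.coe_le_coe ((div_le_iff₀' ht).1 ?_)
  linarith

theorem coe_integral_mem_dualSet [IsProbabilityMeasure P] (hφ : IsDivergenceFunction φ)
    (hβ : 0 ≤ β) (hX : Integrable X P) :
    ((∫ ω, X ω ∂P : ℝ) : EReal) ∈ dualSet φ β P X :=
  ⟨fun _ => 1, integrable_const _, .of_forall fun _ => zero_le_one, by simp,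
    integrable_const _, by simpa [hφ.one], by simpa, by simp⟩

theorem coe_integral_mul_simpleFunc_mem_dualSet [IsFiniteMeasure P] (hX : Integrable X P)
    {Z : SimpleFunc Ω ℝ} (hZ0 : ∀ ω, 0 ≤ Z ω) (hZ1 : ∫ ω, Z ω ∂P = 1)
    (hφZ : ∫ ω, (φ (Z ω)).toReal ∂P ≤ β) :
    ((∫ ω, X ω * Z ω ∂P : ℝ) : EReal) ∈ dualSet φ β P X :=
  ⟨Z, Z.integrable_of_isFiniteMeasure, .of_forall hZ0, hZ1,
    integrable_comp_simpleFunc (fun z => (φ z).toReal) Z, hφZ, integrable_mul_simpleFunc hX Z, rfl⟩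

theorem exists_multipliers_simpleFunc [IsProbabilityMeasure P] (hφ : IsDivergenceFunction φ)
    (hβ : 0 < β) (hX : Integrable X P) {w : ℝ}
    (hw : ∀ Z : SimpleFunc Ω ℝ, (∀ ω, 0 ≤ Z ω) → ∫ ω, Z ω ∂P = 1 →
      ∫ ω, (φ (Z ω)).toReal ∂P ≤ β → ∫ ω, X ω * Z ω ∂P ≤ w) :
    ∃ a t : ℝ, 0 ≤ t ∧ ∀ Z : SimpleFunc Ω ℝ, (∀ ω, 0 ≤ Z ω) →
      ∫ ω, X ω * Z ω ∂P + a * (∫ ω, Z ω ∂P - 1) - t * (∫ ω, (φ (Z ω)).toReal ∂P - β) ≤ w := by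
  let expectation := simpleFuncPairing (integrable_const (μ := P) (1 : ℝ))
  have hexp : ∀ Z, expectation Z = ∫ ω, Z ω ∂P := fun Z => by
    simp [expectation, simpleFuncPairing]
  have hconvex := convexOn_integral_comp_simpleFunc (P := P) hφ.convexOn_toReal
  have hconst : ∀ c : ℝ, 0 ≤ c →
      SimpleFunc.const Ω c ∈ {Z : SimpleFunc Ω ℝ | ∀ ω, Z ω ∈ Set.Ici 0} := fun _ hc _ => hc
  obtain ⟨a, t, ht, hat⟩ := exists_lagrange_multipliers (ℓ := expectation) (c := 1) (b := β)
    hconvex ((simpleFuncPairing hX).concaveOn hconvex.1)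
    (fun Z hZ hZ1 => hw Z hZ (hexp Z ▸ hZ1))
    (hconst 1 zero_le_one) (by simp [hexp]) (by simpa [hφ.one])
    (hconst 0 le_rfl) (by simp [hexp]) (hconst 2 zero_le_two) (by simp [hexp])
  exact ⟨a, t, ht, fun Z hZ => hexp Z ▸ hat Z hZ⟩

theorem rhoDiv_le_of_lagrangian_le [IsFiniteMeasure P] (hφ : IsDivergenceFunction φ)
    (hX : Integrable X P) {a s w : ℝ} (hs : 0 < s)
    (hL : ∀ Z : SimpleFunc Ω ℝ, (∀ ω, 0 ≤ Z ω) →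
      ∫ ω, X ω * Z ω ∂P + a * (∫ ω, Z ω ∂P - 1) - s * (∫ ω, (φ (Z ω)).toReal ∂P - β) ≤ w) :
    rhoDiv φ β P X ≤ w := by
  have hdual : ∀ Z : SimpleFunc Ω ℝ, (∀ ω, 0 ≤ Z ω) →
      ∫ ω, (X ω / s - -a / s) * Z ω - (φ (Z ω)).toReal ∂P ≤ (w + a - s * β) / s := by
    intro Z hZ
    calc ∫ ω, (X ω / s - -a / s) * Z ω - (φ (Z ω)).toReal ∂P
        = (∫ ω, X ω * Z ω ∂P) / s - -a / s * ∫ ω, Z ω ∂P - ∫ ω, (φ (Z ω)).toReal ∂P :=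
          integral_div_sub_mul_sub_simpleFunc hX (fun z => (φ z).toReal) s (-a / s) Z
      _ = (∫ ω, X ω * Z ω ∂P + a * ∫ ω, Z ω ∂P - s * ∫ ω, (φ (Z ω)).toReal ∂P) / s := by
          field_simp
          ring
      _ ≤ (w + a - s * β) / s :=
          div_le_div_of_nonneg_right (by linarith [hL Z hZ]) hs.le
  have hY : Integrable (fun ω => X ω / s - -a / s) P := (hX.div_const s).sub (integrable_const _)
  obtain ⟨hψ, hle⟩ := hφ.integrable_psiR_and_integral_le hY hdual
  refine (rhoDiv_le_rhoObj φ β P X (-a / s) hs).trans ?_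
  rw [rhoObj, if_pos hψ, EReal.coe_le_coe_iff]
  calc s * (β + -a / s + ∫ ω, psiR φ (X ω / s - -a / s) ∂P)
      ≤ s * (β + -a / s + (w + a - s * β) / s) := by gcongr
    _ = w := by
        field_simp
        ring

theorem rhoDiv_le_of_forall_integral_le [IsProbabilityMeasure P] (hφ : IsDivergenceFunction φ)
    (hβ : 0 < β) (hX : Integrable X P) {w : ℝ}
    (hw : ∀ Z : SimpleFunc Ω ℝ, (∀ ω, 0 ≤ Z ω) → ∫ ω, Z ω ∂P = 1 →
      ∫ ω, (φ (Z ω)).toReal ∂P ≤ β → ∫ ω, X ω * Z ω ∂P ≤ w) :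
    rhoDiv φ β P X ≤ w := by
  obtain ⟨a, t, ht, hL⟩ := exists_multipliers_simpleFunc hφ hβ hX hw
  refine EReal.le_of_forall_lt_iff_le.1 fun v hv => ?_
  have hwv : 0 < v - w := sub_pos.2 (EReal.coe_lt_coe_iff.1 hv)
  have hK : 0 < β + psiR φ 0 := add_pos_of_pos_of_nonneg hβ hφ.psiR_zero_nonneg
  -- `t` may vanish; raising it by `d` costs at most `d * (β + ψ 0)`, because `-ψ 0 ≤ E[φ(Z)]`.
  set d := (v - w) / (β + psiR φ 0)
  have hd : 0 < d := div_pos hwv hK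
  have hdK : d * (β + psiR φ 0) = v - w := div_mul_cancel₀ _ hK.ne'
  refine rhoDiv_le_of_lagrangian_le (a := a) hφ hX (add_pos_of_nonneg_of_pos ht hd) fun Z hZ => ?_
  have hcost : d * (β - ∫ ω, (φ (Z ω)).toReal ∂P) ≤ v - w := by
    rw [← hdK]
    have := hφ.neg_psiR_zero_le_integral hZ
      (integrable_comp_simpleFunc (P := P) (fun z => (φ z).toReal) Z)
    exact mul_le_mul_of_nonneg_left (by linarith) hd.le
  linarith [hL Z hZ]

theorem rhoDiv_ne_bot [IsProbabilityMeasure P] (hφ : IsDivergenceFunction φ) (hβ : 0 ≤ β)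
    (hX : Integrable X P) : rhoDiv φ β P X ≠ ⊥ :=
  ne_bot_of_le_ne_bot (EReal.coe_ne_bot _)
    ((le_sSup (coe_integral_mem_dualSet hφ hβ hX)).trans (sSup_dualSet_le_rhoDiv hφ))

theorem rhoDiv_ne_top [IsFiniteMeasure P] (hφ : IsDivergenceFunction φ) (β : ℝ)
    (hX : AEMeasurable X P)
    (hXψ : ∃ t : ℝ, 0 < t ∧ Integrable (fun ω => psiR φ (t * |X ω|)) P) :
    rhoDiv φ β P X ≠ ⊤ := by
  obtain ⟨t, ht, hψ⟩ := hXψ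
  have hle : (fun ω => X ω / t⁻¹ - 0) ≤ fun ω => t * |X ω| := fun ω => by
    simp only [sub_zero, div_inv_eq_mul, mul_comm (X ω)]
    exact mul_le_mul_of_nonneg_left (le_abs_self _) ht.le
  refine ne_top_of_le_ne_top ?_ (rhoDiv_le_rhoObj φ β P X 0 (inv_pos.2 ht))
  rw [rhoObj, if_pos (hφ.integrable_psiR_of_le ((hX.div_const _).sub_const _) hle hψ)]
  exact EReal.coe_ne_top _

end RiskMeasure

theorem rhoDiv_dual_representation_general (P : Measure Ω) [IsProbabilityMeasure P]
    (φ : ℝ → EReal) (hφ : IsDivergenceFunction φ) (β : ℝ) (hβ : 0 < β)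
    (X : Ω → ℝ) (hX : Integrable X P) :
    rhoDiv φ β P X = sSup (dualSet φ β P X) := by
  refine le_antisymm (EReal.le_of_forall_lt_iff_le.1 fun w hw => ?_) (sSup_dualSet_le_rhoDiv hφ)
  refine rhoDiv_le_of_forall_integral_le hφ hβ hX fun Z hZ0 hZ1 hφZ => ?_
  have hmem := coe_integral_mul_simpleFunc_mem_dualSet hX hZ0 hZ1 hφZ
  exact EReal.coe_le_coe_iff.1 ((le_sSup hmem).trans hw.le)

/-- Dual representation: for `X ∈ L^ψ`,
`ρ_{φ,β}(X) = sup { E[X·Z] : Z ∈ L¹, Z ≥ 0 a.s., E Z = 1, E φ(Z) ≤ β }`, a finite value. -/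
theorem rhoDiv_dual_representation (P : Measure Ω) [IsProbabilityMeasure P]
    (φ : ℝ → EReal) (hφ : IsDivergenceFunction φ) (β : ℝ) (hβ : 0 < β)
    (X : Ω → ℝ) (hX : Integrable X P)
    (hXpsi : ∃ t : ℝ, 0 < t ∧ Integrable (fun ω => psiR φ (t * |X ω|)) P) :
    rhoDiv φ β P X = sSup (dualSet φ β P X) ∧
    rhoDiv φ β P X ≠ ⊤ ∧ rhoDiv φ β P X ≠ ⊥ :=
  ⟨rhoDiv_dual_representation_general P φ hφ β hβ X hX,
    rhoDiv_ne_top hφ β hX.aemeasurable hXpsi, rhoDiv_ne_bot hφ hβ.le hX⟩
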